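/- For a real number M ≥ 0 let T(M) be the set of integers k with |k| ≤ M such that the equation (x²−36)(y²−36)(z²−36) + 468·(xyz−4330)² = k has a solution in real numbers and, for every prime p, a solution in ℤ_p, but has no solution in integers x, y, z. Then there exist a constant c > 0 and M₀ such that for all M ≥ M₀ one has #T(M) ≥ c·√M / log M. -/

import Mathlib

/-- The integral model `𝒰_k` of the Markoff-type K3 surface
`(x²−36)(y²−36)(z²−36) + 468(xyz−4330)² = k` is everywhere locally solvable:
it has a real point and a `ℤ_p`-point for every prime `p`. -/
def MK3LocallySolvable (k : ℤ) : Prop :=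
  (∃ x y z : ℝ,
    (x ^ 2 - 36) * (y ^ 2 - 36) * (z ^ 2 - 36) + 468 * (x * y * z - 4330) ^ 2 = (k : ℝ)) ∧
  (∀ (p : ℕ) [Fact p.Prime], ∃ x y z : ℤ_[p],
    (x ^ 2 - 36) * (y ^ 2 - 36) * (z ^ 2 - 36) + 468 * (x * y * z - 4330) ^ 2 = (k : ℤ_[p]))

/-!
The counterexamples are `k = ℓ²` with `ℓ = u² - 13v² ≡ 1 (mod 78)` and `u`, `v` coprime, so that
`13` is a square modulo every prime factor of `ℓ`.

An integral point satisfies `(x² - 36)(y² - 36)(z² - 36) = ℓ² - 13w²` with `w = 6(xyz - 4330)`,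
hence `13` is a square modulo every prime factor of the odd numbers `x ± 6`, and by quadratic
reciprocity `x ± 6` are squares modulo `13`. This forces `x² - 36` to be `0` or `-1` modulo `13`,
and likewise for `y` and `z`, whereas the product of the three factors is `≡ ℓ² ≡ 1`.

Locally, the curve `x = 6` has points with value `ℓ²` as soon as `6` is a unit and `13` the square
of a unit. At the other primes, which do not divide `ℓ`, there is an approximate solution to which
Hensel's lemma applies: it is found by computation for `p ≤ 13` and by Stepanov's method, applied
to the discriminant of the equation as a quadratic in `x`, for `p > 13`.

Finally, `≫ N²` pairs `(u, v)` of size `≪ N` give `≫ N² / log N` values `ℓ ≪ N²`: by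
Cauchy–Schwarz it suffices to bound the collisions of the norm form, which, by `(u - u')(u + u') =
13(v - v')(v + v')`, are controlled by the multiplicative energy `≪ L² log L` of `{1, …, L}` with
`L ≪ N`.
-/

section FiniteField

open Polynomial

variable {F : Type*} [Field F] [Fintype F]

theorem X_pow_card_sub_X_dvd_of_forall_eval_eq_zero {f : F[X]} (hf : ∀ a, f.eval a = 0) :
    X ^ Fintype.card F - X ∣ f := by
  have hmonic : (X ^ Fintype.card F - X : F[X]).Monic :=
    monic_X_pow_sub (by simpa using Fintype.one_lt_card)
  rw [← modByMonic_eq_zero_iff_dvd hmonic]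
  refine eq_zero_of_natDegree_lt_card_of_eval_eq_zero _ Function.injective_id (fun a ↦ ?_) ?_
  · rw [modByMonic_eq_sub_mul_div]
    simp [hf, FiniteField.pow_card]
  · refine (natDegree_modByMonic_lt f hmonic fun h ↦ ?_).trans_eq
      (FiniteField.X_pow_card_sub_X_natDegree_eq F Fintype.one_lt_card)
    simpa using congrArg (eval 0) h

theorem derivative_X_pow_card_sub_X : derivative (X ^ Fintype.card F - X : F[X]) = -1 := by
  simp [derivative_X_pow]

theorem natDegree_add_card_le_or_eq_zero {A B : F[X]} (h : (X ^ Fintype.card F - X) * A = B) :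
    A.natDegree + Fintype.card F ≤ B.natDegree ∨ A = 0 := by
  refine or_iff_not_imp_right.2 fun hA ↦ ?_
  rw [← h, natDegree_mul (FiniteField.X_pow_card_sub_X_ne_zero F Fintype.one_lt_card) hA,
    FiniteField.X_pow_card_sub_X_natDegree_eq F Fintype.one_lt_card, add_comm]

theorem exists_mul_eq_pow_add_one_of_forall_not_isSquare (hF : ringChar F ≠ 2) {D : F[X]}
    (hD : ∀ y, ¬ IsSquare (D.eval y)) :
    ∃ g, (X ^ Fintype.card F - X) * g = D ^ (Fintype.card F / 2) + 1 := by
  have heval (y : F) : (D ^ (Fintype.card F / 2) + 1).eval y = 0 := by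
    have hy : D.eval y ≠ 0 := fun h ↦ hD y (h ▸ IsSquare.zero)
    have hpow := (FiniteField.pow_dichotomy hF hy).resolve_left
      (mt (FiniteField.isSquare_iff hF hy).2 (hD y))
    rw [eval_add, eval_pow, eval_one, hpow, neg_add_cancel]
  exact (X_pow_card_sub_X_dvd_of_forall_eval_eq_zero heval).imp fun _ ↦ Eq.symm

theorem X_pow_card_sub_X_mul_eq_of_mul_eq_pow_add_one (hF : ringChar F ≠ 2) {D g : F[X]}
    (hg : (X ^ Fintype.card F - X) * g = D ^ (Fintype.card F / 2) + 1) :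
    (X ^ Fintype.card F - X) * (2 * D * derivative g + derivative D * g) =
      2 * D * g + derivative D := by
  have hodd := FiniteField.odd_card_of_char_ne_two hF
  have hm : 2 * ((Fintype.card F / 2 : ℕ) : F[X]) = -1 := by
    have hcast : ((2 * (Fintype.card F / 2) + 1 : ℕ) : F[X]) = 0 := by
      rw [show 2 * (Fintype.card F / 2) + 1 = Fintype.card F by omega, ← C_eq_natCast,
        FiniteField.cast_card_eq_zero, C_0]
    push_cast at hcast
    linear_combination hcast
  have hpow : D * D ^ (Fintype.card F / 2 - 1) = D ^ (Fintype.card F / 2) := by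
    rw [← pow_succ', Nat.sub_add_cancel]
    have := Fintype.one_lt_card (α := F)
    omega
  have hderiv := congrArg derivative hg
  rw [derivative_mul, derivative_X_pow_card_sub_X, derivative_add, derivative_pow,
    derivative_one, map_natCast] at hderiv
  linear_combination (2 * D) * hderiv + (2 * (Fintype.card F / 2 : ℕ) * derivative D) * hpow +
    (derivative D * D ^ (Fintype.card F / 2)) * hm + derivative D * hg

theorem X_pow_card_sub_X_mul_eq_of_mul_eq {D g Q : F[X]}
    (hQ : Q = 2 * D * derivative g + derivative D * g)
    (h : (X ^ Fintype.card F - X) * Q = 2 * D * g + derivative D) :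
    (X ^ Fintype.card F - X) * (2 * D * derivative Q - derivative D * Q) =
      4 * D * Q + 2 * D * derivative (derivative D) - derivative D * derivative D := by
  have hderiv := congrArg derivative h
  simp only [derivative_mul, derivative_add, derivative_X_pow_card_sub_X, derivative_ofNat]
    at hderiv
  linear_combination (2 * D) * hderiv - derivative D * h + (-2 * D) * hQ

/- Stepanov's method: if `D` takes no square value, then `W = X ^ q - X` divides `D ^ (q / 2) + 1`.
Differentiating twice, with `W' = -1`, shows that `W` divides `4DQ + 2DD'' - D' ^ 2` for some `Q`
of degree at most `2`. By degrees this polynomial vanishes, so `D` divides `D' ^ 2`. -/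
theorem exists_isSquare_eval_of_separable (hF : ringChar F ≠ 2) (hcard : 7 ≤ Fintype.card F)
    {D : F[X]} (hsep : D.Separable) (hdeg : D.natDegree ≤ 4) (hunit : ¬ IsUnit D) :
    ∃ y, IsSquare (D.eval y) := by
  by_contra! hD
  obtain ⟨g, hg⟩ := exists_mul_eq_pow_add_one_of_forall_not_isSquare hF hD
  have hgdeg : g.natDegree ≤ Fintype.card F - 2 := by
    have hpow : (D ^ (Fintype.card F / 2) + 1).natDegree ≤ Fintype.card F / 2 * 4 := by
      compute_degree
      exact Nat.mul_le_mul_left _ hdeg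
    have hodd := FiniteField.odd_card_of_char_ne_two hF
    rcases natDegree_add_card_le_or_eq_zero hg with h | rfl
    · omega
    · simp
  obtain ⟨Q, hQ⟩ : ∃ Q, Q = 2 * D * derivative g + derivative D * g := ⟨_, rfl⟩
  have hWQ := X_pow_card_sub_X_mul_eq_of_mul_eq_pow_add_one hF hg
  rw [← hQ] at hWQ
  have hD' : (derivative D).natDegree ≤ 3 := (natDegree_derivative_le D).trans (by omega)
  have hD'' : (derivative (derivative D)).natDegree ≤ 2 :=
    (natDegree_derivative_le _).trans (by omega)
  have hQdeg : Q.natDegree ≤ 2 := by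
    have hrhs : (2 * D * g + derivative D).natDegree ≤ 4 + (Fintype.card F - 2) := by
      compute_degree
      omega
    rcases natDegree_add_card_le_or_eq_zero hWQ with h | rfl
    · omega
    · simp
  have hWR := X_pow_card_sub_X_mul_eq_of_mul_eq hQ hWQ
  have hR : 2 * D * derivative Q - derivative D * Q = 0 := by
    have hrhs : (4 * D * Q + 2 * D * derivative (derivative D) -
        derivative D * derivative D).natDegree ≤ 6 := by
      compute_degree
      omega
    exact (natDegree_add_card_le_or_eq_zero hWR).resolve_left (by omega)
  have hdvd : D ∣ derivative D * derivative D :=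
    ⟨4 * Q + 2 * derivative (derivative D), by
      linear_combination hWR - (X ^ Fintype.card F - X) * hR⟩
  exact hunit (hsep.isUnit_of_dvd' dvd_rfl (hsep.dvd_of_dvd_mul_left hdvd))

theorem separable_biquadratic {K : Type*} [Field K] (h2 : (2 : K) ≠ 0) {a b c : K} (hc : c ≠ 0)
    (hdisc : b ^ 2 - 4 * a * c ≠ 0) : (C a * X ^ 4 + C b * X ^ 2 + C c).Separable := by
  set δ := 2 * c * (b ^ 2 - 4 * a * c) with hδ
  have hδ0 : δ ≠ 0 := mul_ne_zero (mul_ne_zero h2 hc) hdisc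
  have hderiv : derivative (C a * X ^ 4 + C b * X ^ 2 + C c) =
      C (4 * a) * X ^ 3 + C (2 * b) * X := by
    simp only [derivative_add, derivative_C_mul, derivative_X_pow, derivative_C, map_mul,
      map_ofNat, map_natCast]
    push_cast
    ring
  refine ⟨C δ⁻¹ * (C (4 * a * b) * X ^ 2 + C (2 * b ^ 2 - 8 * a * c)),
    C δ⁻¹ * -(C (a * b) * X ^ 3 + C (b ^ 2 - 2 * a * c) * X), ?_⟩
  have hδinv : C δ⁻¹ * C δ = 1 := by rw [← C_mul, inv_mul_cancel₀ hδ0, C_1]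
  rw [hderiv, ← hδinv, hδ]
  simp only [map_sub, map_mul, map_pow, map_ofNat]
  ring

theorem not_isUnit_biquadratic {K : Type*} [Field K] {a b c : K}
    (hdisc : b ^ 2 - 4 * a * c ≠ 0) : ¬ IsUnit (C a * X ^ 4 + C b * X ^ 2 + C c) := by
  intro h
  have hcoeff (n : ℕ) (hn : n ≠ 0) := coeff_isUnit_isNilpotent_of_isUnit h |>.2 n hn
  have ha : a = 0 := by simpa [coeff_X, coeff_C] using hcoeff 4 (by norm_num)
  have hb : b = 0 := by simpa [coeff_X, coeff_C] using hcoeff 2 (by norm_num)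
  simp [ha, hb] at hdisc

theorem exists_isSquare_biquadratic (hF : ringChar F ≠ 2) (hcard : 7 ≤ Fintype.card F)
    {a b c : F} (hc : c ≠ 0) (hdisc : b ^ 2 - 4 * a * c ≠ 0) :
    ∃ y, IsSquare (a * y ^ 4 + b * y ^ 2 + c) ∧
      (a * y ^ 4 + b * y ^ 2 + c = 0 → 4 * a * y ^ 3 + 2 * b * y ≠ 0) := by
  have hsep := separable_biquadratic (Ring.two_ne_zero hF) hc hdisc
  obtain ⟨y, hy⟩ := exists_isSquare_eval_of_separable hF hcard hsep (by compute_degree)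
    (not_isUnit_biquadratic hdisc)
  refine ⟨y, by simpa using hy, fun h0 h1 ↦ ?_⟩
  refine hsep.aeval_derivative_ne_zero (x := y) (by simpa using h0) ?_
  simp only [derivative_C_mul, derivative_X_pow, derivative_C, map_add, map_mul, map_pow, map_zero,
    map_natCast, aeval_C, aeval_X, Algebra.algebraMap_self, RingHom.id_apply]
  push_cast
  linear_combination h1

end FiniteField

section Surface

variable {R F : Type*} [CommRing R] [Field F]

/-- The polynomial `(x² - a)(y² - a)(z² - a) + e(xyz - m)²`, whose level sets are the affine
Markoff-type K3 surfaces; the surface of the theorem has `a = 36`, `e = 468`, `m = 4330`. -/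
def markoffK3 (a e m x y z : R) : R :=
  (x ^ 2 - a) * (y ^ 2 - a) * (z ^ 2 - a) + e * (x * y * z - m) ^ 2

/-- The partial derivative of `markoffK3` in `x`. -/
def markoffK3Dx (a e m x y z : R) : R :=
  2 * x * (y ^ 2 - a) * (z ^ 2 - a) + 2 * e * y * z * (x * y * z - m)

/-- A quarter of the discriminant of `markoffK3 a e m x y z - k`, as a quadratic polynomial
in `x`. -/
def markoffK3Disc (a e m k y z : R) : R :=
  (e * m * y * z) ^ 2 - ((y ^ 2 - a) * (z ^ 2 - a) + e * y ^ 2 * z ^ 2) *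
    (e * m ^ 2 - k - a * (y ^ 2 - a) * (z ^ 2 - a))

/-- The partial derivative of `markoffK3Disc` in `y`. -/
def markoffK3DiscDy (a e m k y z : R) : R :=
  2 * y * (e * m * z) ^ 2 -
    2 * y * (z ^ 2 - a + e * z ^ 2) * (e * m ^ 2 - k - a * (y ^ 2 - a) * (z ^ 2 - a)) +
    ((y ^ 2 - a) * (z ^ 2 - a) + e * y ^ 2 * z ^ 2) * (2 * a * y * (z ^ 2 - a))

/-- The level set `markoffK3 a e m = k` has a point where the partial derivative in `x` does not
vanish. As `markoffK3` is symmetric, asking this for `x` loses no generality. -/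
def HasSmoothPoint (a e m k : R) : Prop :=
  ∃ x y z : R, markoffK3 a e m x y z = k ∧ markoffK3Dx a e m x y z ≠ 0

theorem exists_markoffK3_eq_sq {b s : R} (hb : IsUnit b) (hs : IsUnit s)
    (m l : R) : ∃ x y z, markoffK3 (b ^ 2) (s ^ 2) m x y z = l ^ 2 := by
  obtain ⟨b', hb'⟩ := hb.exists_right_inv
  obtain ⟨s', hs'⟩ := hs.exists_right_inv
  have hl : s * (b * 1 * (b' * (m + s' * l)) - m) = l := by
    linear_combination s * (m + s' * l) * hb' + l * hs'
  refine ⟨b, 1, b' * (m + s' * l), ?_⟩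
  rw [markoffK3, sub_self, zero_mul, zero_mul, zero_add, ← mul_pow, hl]

theorem markoffK3_swap (a e m x y z : R) :
    markoffK3 a e m x y z = markoffK3 a e m y x z := by
  unfold markoffK3
  ring

theorem markoffK3Dx_sq (a e m k x y z : R) :
    markoffK3Dx a e m x y z ^ 2 = 4 * (markoffK3Disc a e m k y z +
      ((y ^ 2 - a) * (z ^ 2 - a) + e * y ^ 2 * z ^ 2) * (markoffK3 a e m x y z - k)) := by
  unfold markoffK3 markoffK3Dx markoffK3Disc
  ring

theorem markoffK3Disc_eq_biquadratic (a e m k y z : R) :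
    markoffK3Disc a e m k y z =
      a * (z ^ 2 - a) * (z ^ 2 - a + e * z ^ 2) * y ^ 4 +
      (e ^ 2 * m ^ 2 * z ^ 2 - (z ^ 2 - a + e * z ^ 2) * (a ^ 2 * (z ^ 2 - a) + (e * m ^ 2 - k)) -
        a ^ 2 * (z ^ 2 - a) ^ 2) * y ^ 2 +
      a * (z ^ 2 - a) * (a ^ 2 * (z ^ 2 - a) + (e * m ^ 2 - k)) := by
  unfold markoffK3Disc
  ring

theorem exists_markoffK3_eq_of_isSquare_disc {a e m k y z : F} (h2 : (2 : F) ≠ 0)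
    (hlin : (y ^ 2 - a) * (z ^ 2 - a) + e * y ^ 2 * z ^ 2 = 0 → e * m * y * z ≠ 0)
    (hsq : IsSquare (markoffK3Disc a e m k y z)) : ∃ x, markoffK3 a e m x y z = k := by
  set A := (y ^ 2 - a) * (z ^ 2 - a) + e * y ^ 2 * z ^ 2 with hA
  set c := e * m ^ 2 - k - a * (y ^ 2 - a) * (z ^ 2 - a) with hc
  suffices ∃ x, A * (x * x) + -2 * (e * m * y * z) * x + c = 0 by
    refine this.imp fun x hx ↦ ?_
    rw [markoffK3]
    linear_combination hx
  rcases eq_or_ne A 0 with hA0 | hA0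
  · have hb : 2 * (e * m * y * z) ≠ 0 := mul_ne_zero h2 (hlin hA0)
    refine ⟨c / (2 * (e * m * y * z)), ?_⟩
    linear_combination (c / (2 * (e * m * y * z))) ^ 2 * hA0 - mul_div_cancel₀ c hb
  · have : NeZero (2 : F) := ⟨h2⟩
    obtain ⟨r, hr⟩ := hsq
    refine exists_quadratic_eq_zero hA0 ⟨2 * r, ?_⟩
    rw [markoffK3Disc, ← hA, ← hc] at hr
    rw [discrim]
    linear_combination 4 * hr

theorem hasSmoothPoint_of_markoffK3DiscDy_ne_zero {a e m x y z k : F} (h2 : (2 : F) ≠ 0)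
    (hx : markoffK3 a e m x y z = k)
    (hdisc : markoffK3Disc a e m k y z = 0 → markoffK3DiscDy a e m k y z ≠ 0) :
    HasSmoothPoint a e m k := by
  by_cases hDx : markoffK3Dx a e m x y z = 0
  · have hdisc0 : markoffK3Disc a e m k y z = 0 := by
      have hsq := markoffK3Dx_sq a e m k x y z
      rw [hDx, hx, sub_self, mul_zero, add_zero, zero_pow two_ne_zero, zero_eq_mul] at hsq
      exact hsq.resolve_left (by simpa [show (4 : F) = 2 * 2 by norm_num] using h2)
    refine ⟨y, x, z, markoffK3_swap a e m x y z ▸ hx, fun hDy ↦ hdisc hdisc0 ?_⟩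
    -- Differentiate `markoffK3Dx_sq` in `y`, using that `markoffK3 - k` and `markoffK3Dx` vanish.
    subst hx
    unfold markoffK3Dx at hDx hDy
    unfold markoffK3DiscDy markoffK3
    linear_combination (2 * x * y * (z ^ 2 - a + e * z ^ 2) - e * m * z) * hDx -
      ((y ^ 2 - a) * (z ^ 2 - a) + e * y ^ 2 * z ^ 2) * hDy
  · exact ⟨x, y, z, hx, hDx⟩

variable [Fintype F]

open Polynomial in
theorem exists_markoffK3Disc_coeff_ne_zero (hcard : 13 < Fintype.card F) {a e : F} (ha : a ≠ 0)
    (he : e ≠ 0) (m B : F) :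
    ∃ z, z ≠ 0 ∧ z ^ 2 - a ≠ 0 ∧ a ^ 2 * (z ^ 2 - a) + B ≠ 0 ∧
      (e ^ 2 * m ^ 2 * z ^ 2 - (z ^ 2 - a + e * z ^ 2) * (a ^ 2 * (z ^ 2 - a) + B) -
          a ^ 2 * (z ^ 2 - a) ^ 2) ^ 2 -
        4 * (a * (z ^ 2 - a) * (z ^ 2 - a + e * z ^ 2)) *
          (a * (z ^ 2 - a) * (a ^ 2 * (z ^ 2 - a) + B)) ≠ 0 := by
  -- The last expression factors into two quartics in `z` with leading coefficient `-e * a ^ 2`.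
  set Q : F → F[X] := fun n ↦ (C a * (X ^ 2 - C a) + C n * X) ^ 2 -
    (X ^ 2 - C a + C e * X ^ 2) * (C (a ^ 2) * (X ^ 2 - C a) + C B) with hQ
  set P : F[X] := X * (X ^ 2 - C a) * (C (a ^ 2) * (X ^ 2 - C a) + C B) *
    (Q (e * m) * Q (-(e * m))) with hP
  have hlead : a ^ 2 - (1 + e) * a ^ 2 ≠ 0 := by
    rw [show a ^ 2 - (1 + e) * a ^ 2 = -(e * a ^ 2) by ring]
    exact neg_ne_zero.2 (mul_ne_zero he (pow_ne_zero 2 ha))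
  have hdeg : P.natDegree = 13 := by
    simp only [hP, hQ]
    compute_degree!
  have hP0 : P ≠ 0 := ne_zero_of_natDegree_gt (hdeg ▸ (by norm_num : 0 < 13))
  obtain ⟨z, hz⟩ := P.exists_eval_ne_zero_of_natDegree_lt_card hP0
    (by rw [hdeg, Cardinal.mk_fintype]; exact_mod_cast hcard)
  simp only [hP, hQ, eval_mul, eval_sub, eval_add, eval_pow, eval_X, eval_C, mul_ne_zero_iff] at hz
  obtain ⟨⟨⟨hz, hza⟩, hzB⟩, hzQ⟩ := hz
  refine ⟨z, hz, hza, hzB, ?_⟩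
  convert mul_ne_zero hzQ.1 hzQ.2 using 1
  ring

theorem hasSmoothPoint_of_card (hF : ringChar F ≠ 2) (hcard : 13 < Fintype.card F) {a e m : F}
    (ha : a ≠ 0) (he : e ≠ 0) (hm : m ≠ 0) (k : F) : HasSmoothPoint a e m k := by
  have h2 : (2 : F) ≠ 0 := Ring.two_ne_zero hF
  obtain ⟨z, hz, hza, hzB, hzdisc⟩ :=
    exists_markoffK3Disc_coeff_ne_zero hcard ha he m (e * m ^ 2 - k)
  obtain ⟨y, hsq, hDy⟩ := exists_isSquare_biquadratic hF (by omega)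
    (mul_ne_zero (mul_ne_zero ha hza) hzB) hzdisc
  rw [← markoffK3Disc_eq_biquadratic] at hsq hDy
  have hlin (h : (y ^ 2 - a) * (z ^ 2 - a) + e * y ^ 2 * z ^ 2 = 0) : e * m * y * z ≠ 0 := by
    have hy : y ≠ 0 := by
      rintro rfl
      exact mul_ne_zero ha hza (by linear_combination -h)
    positivity
  obtain ⟨x, hx⟩ := exists_markoffK3_eq_of_isSquare_disc h2 hlin hsq
  refine hasSmoothPoint_of_markoffK3DiscDy_ne_zero h2 hx fun hdisc ↦ ?_
  convert hDy hdisc using 1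
  rw [markoffK3DiscDy]
  ring

end Surface

section Padic

open Polynomial

variable {p : ℕ} [Fact p.Prime]

theorem toZMod_eq_zero_iff_norm_lt_one {x : ℤ_[p]} : PadicInt.toZMod x = 0 ↔ ‖x‖ < 1 := by
  rw [← RingHom.mem_ker, PadicInt.ker_toZMod, IsLocalRing.mem_maximalIdeal, PadicInt.mem_nonunits]

theorem isUnit_iff_toZMod_ne_zero {x : ℤ_[p]} : IsUnit x ↔ PadicInt.toZMod x ≠ 0 := by
  rw [Ne, toZMod_eq_zero_iff_norm_lt_one, PadicInt.isUnit_iff, not_lt,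
    (PadicInt.norm_le_one x).ge_iff_eq]

theorem exists_quadratic_root_of_norm_lt {a b c t : ℤ_[p]}
    (h : ‖a * t ^ 2 + b * t + c‖ < ‖2 * a * t + b‖ ^ 2) : ∃ s, a * s ^ 2 + b * s + c = 0 := by
  have hderiv : aeval t (derivative (C a * X ^ 2 + C b * X + C c)) = 2 * a * t + b := by
    simp only [derivative_C_mul, derivative_X_pow, derivative_X, derivative_C, map_add,
      map_mul, map_pow, map_natCast, aeval_C, aeval_X, map_one, map_zero,
      Algebra.algebraMap_self, RingHom.id_apply]
    push_cast
    ring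
  obtain ⟨s, hs, -⟩ := hensels_lemma (F := C a * X ^ 2 + C b * X + C c) (a := t)
    (by rw [hderiv]; simpa using h)
  exact ⟨s, by simpa using hs⟩

theorem isSquare_of_isSquare_toZMod (hp : p ≠ 2) {u : ℤ_[p]} (hu : IsUnit u)
    (hsq : IsSquare (PadicInt.toZMod u)) : IsSquare u := by
  obtain ⟨s, hs⟩ := hsq
  obtain ⟨t, rfl⟩ := ZMod.ringHom_surjective PadicInt.toZMod s
  have ht : IsUnit t := by
    rw [isUnit_iff_toZMod_ne_zero] at hu ⊢
    rintro h
    simp [h, hs] at hu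
  have h2 : IsUnit (2 : ℤ_[p]) := by
    have : NeZero (2 : ZMod p) := ⟨Ring.two_ne_zero (by rwa [ZMod.ringChar_zmod_n])⟩
    rw [isUnit_iff_toZMod_ne_zero, map_ofNat]
    exact two_ne_zero
  obtain ⟨r, hr⟩ := exists_quadratic_root_of_norm_lt (a := 1) (b := 0) (c := -u) (t := t) <| by
    rw [mul_one, add_zero, PadicInt.isUnit_iff.1 (h2.mul ht), one_pow,
      ← toZMod_eq_zero_iff_norm_lt_one]
    simp [hs, pow_two]
  exact ⟨r, by linear_combination -hr⟩

theorem exists_markoffK3_eq_of_norm_lt {a e m k t y z : ℤ_[p]}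
    (h : ‖markoffK3 a e m t y z - k‖ < ‖markoffK3Dx a e m t y z‖ ^ 2) :
    ∃ x, markoffK3 a e m x y z = k := by
  obtain ⟨x, hx⟩ := exists_quadratic_root_of_norm_lt
    (a := (y ^ 2 - a) * (z ^ 2 - a) + e * y ^ 2 * z ^ 2) (b := -(2 * e * m * y * z))
    (c := -a * (y ^ 2 - a) * (z ^ 2 - a) + e * m ^ 2 - k) (t := t) <| by
      convert h using 3
      all_goals
        simp only [markoffK3, markoffK3Dx]
        ring
  refine ⟨x, ?_⟩
  rw [markoffK3]
  linear_combination hx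

theorem HasSmoothPoint.exists_padicInt {a e m k : ℤ_[p]}
    (h : HasSmoothPoint (PadicInt.toZMod a) (PadicInt.toZMod e) (PadicInt.toZMod m)
      (PadicInt.toZMod k)) :
    ∃ x y z, markoffK3 a e m x y z = k := by
  obtain ⟨x, y, z, heq, hne⟩ := h
  obtain ⟨x, rfl⟩ := ZMod.ringHom_surjective PadicInt.toZMod x
  obtain ⟨y, rfl⟩ := ZMod.ringHom_surjective PadicInt.toZMod y
  obtain ⟨z, rfl⟩ := ZMod.ringHom_surjective PadicInt.toZMod z
  have hunit : IsUnit (markoffK3Dx a e m x y z) :=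
    isUnit_iff_toZMod_ne_zero.2 (by simpa [markoffK3Dx, map_ofNat] using hne)
  obtain ⟨x', hx'⟩ := exists_markoffK3_eq_of_norm_lt (k := k) (t := x) (y := y) (z := z) <| by
    rw [PadicInt.isUnit_iff.1 hunit, one_pow, ← toZMod_eq_zero_iff_norm_lt_one, map_sub,
      sub_eq_zero, ← heq]
    simp [markoffK3]
  exact ⟨x', y, z, hx'⟩

end Padic

section LocalPoints

theorem exists_real_markoffK3_eq_sq (l : ℝ) :
    ∃ x y z : ℝ, markoffK3 36 468 4330 x y z = l ^ 2 := by
  have hsq : (6 * √13 : ℝ) ^ 2 = 468 := by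
    rw [mul_pow, Real.sq_sqrt (by norm_num)]
    norm_num
  have h := exists_markoffK3_eq_sq (b := (6 : ℝ)) (s := 6 * √13) (by simp) (by simp) 4330 l
  rwa [hsq, show (6 : ℝ) ^ 2 = 36 by norm_num] at h

theorem hasSmoothPoint_zmod_of_mem {p : ℕ} (hp : p ∈ ({3, 5, 7, 11, 13} : Finset ℕ)) :
    ∀ l : ZMod p, l ≠ 0 → HasSmoothPoint 36 468 4330 (l ^ 2) := by
  simp only [Finset.mem_insert, Finset.mem_singleton] at hp
  unfold HasSmoothPoint markoffK3 markoffK3Dx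
  rcases hp with rfl | rfl | rfl | rfl | rfl <;> decide

variable {p : ℕ} [Fact p.Prime]

theorem exists_padicInt_markoffK3_eq_sq_of_isSquare (hp : ¬ p ∣ 78)
    (h13 : IsSquare (13 : ZMod p)) (l : ℤ_[p]) :
    ∃ x y z, markoffK3 36 468 4330 x y z = l ^ 2 := by
  have hunit (n : ℕ) (hn : n ∣ 78) : IsUnit (n : ℤ_[p]) := by
    rw [isUnit_iff_toZMod_ne_zero, map_natCast, Ne, ZMod.natCast_eq_zero_iff]
    exact fun h ↦ hp (h.trans hn)
  have h6 : IsUnit (6 : ℤ_[p]) := hunit 6 (by norm_num)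
  have h13_unit : IsUnit (13 : ℤ_[p]) := hunit 13 (by norm_num)
  obtain ⟨r, hr⟩ := isSquare_of_isSquare_toZMod (u := (13 : ℤ_[p])) (by rintro rfl; norm_num at hp)
    h13_unit (by rwa [map_ofNat])
  have hr_unit : IsUnit r := isUnit_of_mul_isUnit_left (hr ▸ h13_unit)
  convert exists_markoffK3_eq_sq h6 (h6.mul hr_unit) 4330 l using 8
  · norm_num
  · linear_combination 36 * hr

theorem exists_padicInt_two_markoffK3_eq_sq {l : ℤ} (hl : Odd l) :
    ∃ x y z : ℤ_[2], markoffK3 36 468 4330 x y z = l ^ 2 := by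
  suffices ‖markoffK3 36 468 4330 1 1 1 - (l : ℤ_[2]) ^ 2‖ <
      ‖markoffK3Dx (36 : ℤ_[2]) 468 4330 1 1 1‖ ^ 2 from
    let ⟨x, hx⟩ := exists_markoffK3_eq_of_norm_lt this
    ⟨x, 1, 1, hx⟩
  have hvalue : markoffK3 36 468 4330 1 1 1 - (l : ℤ_[2]) ^ 2 =
      (markoffK3 36 468 4330 1 1 1 - l ^ 2 : ℤ) := by
    norm_num [markoffK3]
  have hderiv : markoffK3Dx (36 : ℤ_[2]) 468 4330 1 1 1 =
      (2 : ℕ) * ((markoffK3Dx 36 468 4330 1 1 1 / 2 : ℤ) : ℤ_[2]) := by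
    norm_num [markoffK3Dx]
  have hunit : ‖((markoffK3Dx 36 468 4330 1 1 1 / 2 : ℤ) : ℤ_[2])‖ = 1 := by
    rw [← PadicInt.isUnit_iff, isUnit_iff_toZMod_ne_zero, map_intCast]
    decide
  have hsmall : ‖((markoffK3 36 468 4330 1 1 1 - l ^ 2 : ℤ) : ℤ_[2])‖ ≤
      (2 : ℕ) ^ (-(3 : ℕ) : ℤ) := by
    rw [PadicInt.norm_int_le_pow_iff_dvd]
    have hsq : (8 : ℤ) ∣ l ^ 2 - 1 := Int.eight_dvd_sq_sub_one_of_odd hl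
    norm_num [markoffK3]
    omega
  rw [hvalue, hderiv, norm_mul, PadicInt.norm_p, hunit]
  exact hsmall.trans_lt (by norm_num)

theorem hasSmoothPoint_zmod_of_not_isSquare (hp : 13 < p) (h13 : ¬ IsSquare (13 : ZMod p))
    (k : ZMod p) : HasSmoothPoint 36 468 4330 k := by
  have hprime : p.Prime := Fact.out
  have h433 : p ≠ 433 := by
    rintro rfl
    exact h13 ⟨130, by reduce_mod_char⟩
  have hne_zero (n : ℕ) (hn : n ∣ Nat.factorial 13 * 433) : (n : ZMod p) ≠ 0 := by
    rw [Ne, ZMod.natCast_eq_zero_iff]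
    intro h
    rcases hprime.dvd_mul.1 (h.trans hn) with h | h
    · exact hp.not_ge (hprime.dvd_factorial.1 h)
    · exact h433 ((Nat.prime_dvd_prime_iff_eq hprime (by norm_num)).1 h)
  exact hasSmoothPoint_of_card (by rw [ZMod.ringChar_zmod_n]; omega) (by rwa [ZMod.card])
    (hne_zero 36 (by decide)) (hne_zero 468 (by decide)) (hne_zero 4330 (by decide)) k

theorem exists_padicInt_markoffK3_eq_sq {l : ℤ} (hl : IsCoprime l 78)
    (hsplit : (p : ℤ) ∣ l → IsSquare (13 : ZMod p)) :
    ∃ x y z : ℤ_[p], markoffK3 36 468 4330 x y z = l ^ 2 := by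
  have hprime : p.Prime := Fact.out
  by_cases hsq : ¬ p ∣ 78 ∧ IsSquare (13 : ZMod p)
  · exact exists_padicInt_markoffK3_eq_sq_of_isSquare hsq.1 hsq.2 l
  have hpl : ¬ (p : ℤ) ∣ l := fun h ↦ hsq
    ⟨fun h78 ↦ (Nat.prime_iff_prime_int.1 hprime).not_isUnit
      (hl.isUnit_of_dvd' h (Int.natCast_dvd_natCast.2 h78)), hsplit h⟩
  rcases eq_or_ne p 2 with rfl | hp2
  · exact exists_padicInt_two_markoffK3_eq_sq (Int.not_even_iff_odd.1 (mt Even.two_dvd hpl))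
  suffices HasSmoothPoint 36 468 4330 (l ^ 2 : ZMod p) from
    HasSmoothPoint.exists_padicInt (by simpa [map_ofNat] using this)
  rcases le_or_gt p 13 with hp | hp
  · refine hasSmoothPoint_zmod_of_mem ?_ _ (by rwa [Ne, ZMod.intCast_zmod_eq_zero_iff_dvd])
    interval_cases p <;> revert hprime hp2 <;> decide
  · refine hasSmoothPoint_zmod_of_not_isSquare hp (fun h13 ↦ hsq ⟨fun h78 ↦ ?_, h13⟩) _
    exact hp.not_ge (hprime.dvd_factorial.1 (h78.trans (by decide)))

end LocalPoints

section Obstruction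

/-- Every prime factor of `l` splits or ramifies in `ℚ(√d)`, expressed as: `d` is a square modulo
every prime factor of `l`. -/
def PrimeFactorsSplit (d l : ℤ) : Prop :=
  ∀ q : ℕ, q.Prime → (q : ℤ) ∣ l → IsSquare (d : ZMod q)

theorem isSquare_zmod_or_dvd_and_dvd_of_dvd_sq_sub {q : ℕ} (hq : q.Prime) {d u v : ℤ}
    (h : (q : ℤ) ∣ u ^ 2 - d * v ^ 2) :
    IsSquare (d : ZMod q) ∨ (q : ℤ) ∣ u ∧ (q : ℤ) ∣ v := by
  have : Fact q.Prime := ⟨hq⟩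
  simp only [← ZMod.intCast_zmod_eq_zero_iff_dvd] at h ⊢
  push_cast at h
  by_cases hv : (v : ZMod q) = 0
  · refine .inr ⟨?_, hv⟩
    simpa [hv] using h
  · refine .inl ⟨u / v, ?_⟩
    field_simp
    linear_combination -h

theorem primeFactorsSplit_sq_sub {d u v : ℤ} (huv : IsCoprime u v) :
    PrimeFactorsSplit d (u ^ 2 - d * v ^ 2) := fun _ hq hdvd ↦
  (isSquare_zmod_or_dvd_and_dvd_of_dvd_sq_sub hq hdvd).resolve_right fun h ↦
    (Nat.prime_iff_prime_int.1 hq).not_isUnit (huv.isUnit_of_dvd' h.1 h.2)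

theorem PrimeFactorsSplit.of_dvd_sq_sub {d l n w : ℤ} (hl : PrimeFactorsSplit d l)
    (hn : n ∣ l ^ 2 - d * w ^ 2) : PrimeFactorsSplit d n := fun q hq hqn ↦
  (isSquare_zmod_or_dvd_and_dvd_of_dvd_sq_sub hq (hqn.trans hn)).elim id fun h ↦ hl q hq h.1

theorem PrimeFactorsSplit.isSquare_zmod {r : ℕ} [Fact r.Prime] (hr : r % 4 = 1) {n : ℤ}
    (hodd : Odd n) (hn : PrimeFactorsSplit r n) : IsSquare (n : ZMod r) := by
  have hjacobi : jacobiSym r n.natAbs ≠ -1 := fun h ↦ by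
    obtain ⟨q, hq, hqn, hqr⟩ := jacobiSym.eq_neg_one_at_prime_divisor_of_eq_neg_one h
    have : Fact q.Prime := ⟨hq⟩
    exact ZMod.nonsquare_of_jacobiSym_eq_neg_one hqr (hn q hq (Int.natCast_dvd.2 hqn))
  have hsq : IsSquare ((n.natAbs : ℤ) : ZMod r) := by
    by_contra hns
    rw [← ZMod.nonsquare_iff_jacobiSym_eq_neg_one,
      jacobiSym.quadratic_reciprocity_one_mod_four' (Int.natAbs_odd.2 hodd) hr] at hns
    exact hjacobi hns
  have hneg : IsSquare (-1 : ZMod r) := ZMod.exists_sq_eq_neg_one_iff.2 (by omega)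
  rcases Int.natAbs_eq n with h | h
  · rwa [h]
  · rw [h, Int.cast_neg, ← neg_one_mul]
    exact hneg.mul hsq

/-- The integers `l` whose square is shown to be a counterexample to the integral Hasse principle.
The modulus `78 = 2 * 3 * 13` is the product of the primes dividing `a * e = 36 * 468`. -/
structure IsAdmissible (l : ℤ) : Prop where
  modEq_one : l ≡ 1 [ZMOD 78]
  split : PrimeFactorsSplit 13 l

theorem IsAdmissible.of_isCoprime {u v : ℤ} (hu : u ≡ 1 [ZMOD 78]) (hv : 6 ∣ v)
    (huv : IsCoprime u v) : IsAdmissible (u ^ 2 - 13 * v ^ 2) where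
  modEq_one := by
    have h78 : 13 * v ^ 2 ≡ 0 [ZMOD 78] :=
      Int.modEq_zero_iff_dvd.2 (mul_dvd_mul_left 13 (dvd_pow hv two_ne_zero))
    simpa using (hu.pow 2).sub h78
  split := primeFactorsSplit_sq_sub huv

variable {l : ℤ}

theorem IsAdmissible.isCoprime (hl : IsAdmissible l) : IsCoprime l 78 := by
  obtain ⟨c, hc⟩ := hl.modEq_one.dvd
  exact ⟨1, c, by linear_combination -hc⟩

theorem IsAdmissible.odd (hl : IsAdmissible l) : Odd l := by
  have := hl.modEq_one.of_dvd (by norm_num : (2 : ℤ) ∣ 78)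
  rwa [Int.odd_iff]

theorem IsAdmissible.locallySolvable (hl : IsAdmissible l) : MK3LocallySolvable (l ^ 2) := by
  rw [MK3LocallySolvable]
  push_cast
  exact ⟨exists_real_markoffK3_eq_sq l, fun p _ ↦
    exists_padicInt_markoffK3_eq_sq hl.isCoprime (by simpa using hl.split p Fact.out)⟩

theorem zmod_thirteen_sq_sub_eq_zero_or_neg_one :
    ∀ x : ZMod 13, IsSquare (x - 6) → IsSquare (x + 6) → x ^ 2 - 36 = 0 ∨ x ^ 2 - 36 = -1 := by
  decide

theorem odd_of_odd_sq_sub_thirty_six {x : ℤ} (hx : Odd (x ^ 2 - 36)) : Odd x := by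
  simpa [Int.odd_sub, Int.odd_pow, (by decide : Even (36 : ℤ))] using hx

theorem IsAdmissible.sq_sub_zmod_thirteen (hl : IsAdmissible l) {x w : ℤ} (hx : Odd x)
    (hdvd : x ^ 2 - 36 ∣ l ^ 2 - 13 * w ^ 2) :
    (x : ZMod 13) ^ 2 - 36 = 0 ∨ (x : ZMod 13) ^ 2 - 36 = -1 := by
  have : Fact (Nat.Prime 13) := ⟨by norm_num⟩
  have hfactor : x ^ 2 - 36 = (x - 6) * (x + 6) := by ring
  have heven : Even (6 : ℤ) := by decide
  have hsub := hl.split.of_dvd_sq_sub ((Dvd.intro _ hfactor.symm).trans hdvd)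
  have hadd := hl.split.of_dvd_sq_sub ((Dvd.intro_left _ hfactor.symm).trans hdvd)
  refine zmod_thirteen_sq_sub_eq_zero_or_neg_one x ?_ ?_
  · exact_mod_cast hsub.isSquare_zmod (r := 13) rfl (hx.sub_even heven)
  · exact_mod_cast hadd.isSquare_zmod (r := 13) rfl (hx.add_even heven)

theorem IsAdmissible.markoffK3_ne_sq (hl : IsAdmissible l) (x y z : ℤ) :
    markoffK3 36 468 4330 x y z ≠ l ^ 2 := by
  intro h
  rw [markoffK3] at h
  set w := 6 * (x * y * z - 4330) with hw
  have hnorm : (x ^ 2 - 36) * (y ^ 2 - 36) * (z ^ 2 - 36) = l ^ 2 - 13 * w ^ 2 := by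
    rw [hw]
    linear_combination h
  have hodd : Odd ((x ^ 2 - 36) * (y ^ 2 - 36) * (z ^ 2 - 36)) := by
    rw [hnorm, hw, mul_pow]
    exact hl.odd.pow.sub_even (((by decide : Even (6 ^ 2 : ℤ)).mul_right _).mul_left _)
  rw [Int.odd_mul, Int.odd_mul] at hodd
  obtain ⟨⟨hx, hy⟩, hz⟩ := hodd
  have hx13 := hl.sq_sub_zmod_thirteen (odd_of_odd_sq_sub_thirty_six hx)
    ⟨(y ^ 2 - 36) * (z ^ 2 - 36), by rw [← hnorm]; ring⟩
  have hy13 := hl.sq_sub_zmod_thirteen (odd_of_odd_sq_sub_thirty_six hy)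
    ⟨(x ^ 2 - 36) * (z ^ 2 - 36), by rw [← hnorm]; ring⟩
  have hz13 := hl.sq_sub_zmod_thirteen (odd_of_odd_sq_sub_thirty_six hz)
    ⟨(x ^ 2 - 36) * (y ^ 2 - 36), by rw [← hnorm]; ring⟩
  have hl13 : (l : ZMod 13) = 1 := by
    exact_mod_cast (ZMod.intCast_eq_intCast_iff l 1 13).2 (hl.modEq_one.of_dvd (by norm_num))
  have hprod : ((x : ZMod 13) ^ 2 - 36) * (y ^ 2 - 36) * (z ^ 2 - 36) = 1 := by
    have := congrArg (Int.cast : ℤ → ZMod 13) hnorm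
    push_cast at this
    rw [this, hl13, show (13 : ZMod 13) = 0 from rfl]
    ring
  revert hprod
  rcases hx13 with hx | hx <;> rcases hy13 with hy | hy <;> rcases hz13 with hz | hz <;>
    rw [hx, hy, hz] <;> decide

end Obstruction

section MulEnergy

open Finset

theorem card_filter_max_eq_le (L m : ℕ) :
    #{ac ∈ Icc 1 L ×ˢ Icc 1 L | max ac.1 ac.2 = m} ≤ 2 * m := by
  have hsubset : {ac ∈ Icc 1 L ×ˢ Icc 1 L | max ac.1 ac.2 = m} ⊆
      {m} ×ˢ Icc 1 m ∪ Icc 1 m ×ˢ {m} := by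
    rintro ⟨a, c⟩ hac
    simp only [mem_filter, mem_product, mem_union, mem_Icc, mem_singleton] at hac ⊢
    omega
  calc _ ≤ #({m} ×ˢ Icc 1 m ∪ Icc 1 m ×ˢ {m}) := card_le_card hsubset
    _ ≤ #({m} ×ˢ Icc 1 m) + #(Icc 1 m ×ˢ {m}) := card_union_le _ _
    _ = 2 * m := by simp [two_mul]

theorem exists_factors_of_mul_eq_mul {A B C D : ℕ} (hA : 0 < A) (h : A * B = C * D) :
    ∃ a c g t, A = g * a ∧ C = g * c ∧ B = c * t ∧ D = a * t := by
  obtain ⟨g, a, c, hg, hac, rfl, rfl⟩ := Nat.exists_coprime' (Nat.gcd_pos_of_pos_left C hA)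
  have hmul : a * B = c * D := Nat.eq_of_mul_eq_mul_left hg (by linarith)
  obtain ⟨t, rfl⟩ : a ∣ D := hac.dvd_of_dvd_mul_left ⟨B, hmul.symm⟩
  have ha : 0 < a := Nat.pos_of_mul_pos_right hA
  exact ⟨a, c, g, t, mul_comm _ _, mul_comm _ _,
    Nat.eq_of_mul_eq_mul_left ha (by linarith), rfl⟩

theorem mulEnergy_Icc_le_sum (L : ℕ) :
    mulEnergy (Icc 1 L) (Icc 1 L) ≤
      ∑ ac ∈ Icc 1 L ×ˢ Icc 1 L, (L / max ac.1 ac.2) * (L / max ac.1 ac.2) := by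
  set params := (Icc 1 L ×ˢ Icc 1 L).sigma fun ac ↦
    Icc 1 (L / max ac.1 ac.2) ×ˢ Icc 1 (L / max ac.1 ac.2) with hparams
  have hcard : #params = ∑ ac ∈ Icc 1 L ×ˢ Icc 1 L, (L / max ac.1 ac.2) * (L / max ac.1 ac.2) := by
    simp [hparams]
  rw [← hcard]
  refine card_le_card_of_surjOn
    (fun ⟨(a, c), (g, t)⟩ ↦ ((g * a, g * c), (c * t, a * t))) ?_
  rintro ⟨⟨A, C⟩, ⟨B, D⟩⟩ hmem
  simp only [mem_coe, mem_filter, mem_product, mem_Icc] at hmem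
  obtain ⟨⟨⟨hA, hC⟩, hB, hD⟩, hmul⟩ := hmem
  obtain ⟨a, c, g, t, rfl, rfl, rfl, rfl⟩ := exists_factors_of_mul_eq_mul hA.1 hmul
  refine ⟨⟨(a, c), (g, t)⟩, ?_, rfl⟩
  obtain ⟨hg, ha⟩ := CanonicallyOrderedAdd.mul_pos.1 (Nat.succ_le_iff.1 hA.1)
  obtain ⟨hc, ht⟩ := CanonicallyOrderedAdd.mul_pos.1 (Nat.succ_le_iff.1 hB.1)
  have hmax : 0 < max a c := lt_max_of_lt_left ha
  simp only [hparams, mem_coe, mem_sigma, mem_product, mem_Icc, Nat.le_div_iff_mul_le hmax,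
    mul_max, max_le_iff]
  exact ⟨⟨⟨ha, (Nat.le_mul_of_pos_left a hg).trans hA.2⟩,
    ⟨hc, (Nat.le_mul_of_pos_left c hg).trans hC.2⟩⟩, ⟨hg, hA.2, hC.2⟩,
    ⟨ht, mul_comm a t ▸ hD.2, mul_comm c t ▸ hB.2⟩⟩

theorem mulEnergy_Icc_le (L : ℕ) :
    (mulEnergy (Icc 1 L) (Icc 1 L) : ℝ) ≤ 2 * L ^ 2 * (1 + Real.log L) := by
  have hmaps : ∀ ac ∈ Icc 1 L ×ˢ Icc 1 L, max ac.1 ac.2 ∈ Icc 1 L := by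
    intro ac hac
    simp only [mem_product, mem_Icc] at hac ⊢
    omega
  have hnat : mulEnergy (Icc 1 L) (Icc 1 L) ≤ ∑ m ∈ Icc 1 L, 2 * m * ((L / m) * (L / m)) := by
    refine (mulEnergy_Icc_le_sum L).trans ?_
    rw [← sum_fiberwise_of_maps_to hmaps]
    refine sum_le_sum fun m _ ↦ ?_
    rw [sum_congr rfl fun ac hac ↦ by rw [(mem_filter.1 hac).2], sum_const, smul_eq_mul]
    exact Nat.mul_le_mul_right _ (card_filter_max_eq_le L m)
  calc (mulEnergy (Icc 1 L) (Icc 1 L) : ℝ)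
      ≤ ∑ m ∈ Icc 1 L, 2 * m * (((L / m : ℕ) : ℝ) * (L / m : ℕ)) := by exact_mod_cast hnat
    _ ≤ ∑ m ∈ Icc 1 L, 2 * m * ((L / m : ℝ) * (L / m)) := by
        gcongr <;> exact Nat.cast_div_le
    _ = 2 * L ^ 2 * harmonic L := by
        rw [harmonic_eq_sum_Icc, Rat.cast_sum, mul_sum]
        refine sum_congr rfl fun m hm ↦ ?_
        have : (m : ℝ) ≠ 0 := Nat.cast_ne_zero.2 (Nat.one_le_iff_ne_zero.1 (mem_Icc.1 hm).1)
        push_cast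
        field_simp
    _ ≤ 2 * L ^ 2 * (1 + Real.log L) := by
        gcongr
        exact harmonic_le_one_add_log L

end MulEnergy

section NormForm

open Finset

theorem sq_card_le_card_image_mul_card_collisions {α β : Type*} [DecidableEq β]
    (s : Finset α) (f : α → β) :
    #s ^ 2 ≤ #(s.image f) * #{xy ∈ s ×ˢ s | f xy.1 = f xy.2} := by
  have hmaps : ∀ xy ∈ {xy ∈ s ×ˢ s | f xy.1 = f xy.2}, f xy.1 ∈ s.image f := fun xy hxy ↦
    mem_image_of_mem f (mem_product.1 (mem_filter.1 hxy).1).1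
  have hfiber (b : β) : {xy ∈ {xy ∈ s ×ˢ s | f xy.1 = f xy.2} | f xy.1 = b} =
      {x ∈ s | f x = b} ×ˢ {x ∈ s | f x = b} := by
    ext ⟨x, y⟩
    simp only [mem_filter, mem_product]
    grind
  rw [card_eq_sum_card_image f s, card_eq_sum_card_fiberwise hmaps]
  simp only [hfiber, card_product, ← sq]
  exact sq_sum_le_card_mul_sum_sq

/-- The norm `u² - d v²` of `u + v√d`, on pairs of natural numbers and with integer values. -/
def normForm (d : ℕ) (p : ℕ × ℕ) : ℤ := (p.1 : ℤ) ^ 2 - d * (p.2 : ℤ) ^ 2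

/-- The pairs of elements of `P` with equal norm. -/
def normCollisions (d : ℕ) (P : Finset (ℕ × ℕ)) : Finset ((ℕ × ℕ) × (ℕ × ℕ)) :=
  {pq ∈ P ×ˢ P | normForm d pq.1 = normForm d pq.2}

variable {d L : ℕ} {P : Finset (ℕ × ℕ)}

theorem normForm_eq_normForm_iff {p q : ℕ × ℕ} : normForm d p = normForm d q ↔
    ((p.1 : ℤ) - q.1) * (p.1 + q.1) = d * (p.2 - q.2) * (p.2 + q.2) := by
  unfold normForm
  constructor <;> intro h <;> linear_combination h

theorem snd_lt_snd_of_normForm_eq {p q : ℕ × ℕ} (h : normForm d p = normForm d q)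
    (hlt : q.1 < p.1) : q.2 < p.2 := by
  by_contra! hle
  rw [normForm_eq_normForm_iff] at h
  zify at hlt hle
  have hpos : 0 < ((p.1 : ℤ) - q.1) * (p.1 + q.1) := mul_pos (by omega) (by omega)
  have hneg : (d * (p.2 - q.2) * (p.2 + q.2) : ℤ) ≤ 0 :=
    mul_nonpos_of_nonpos_of_nonneg
      (mul_nonpos_of_nonneg_of_nonpos (by omega) (by omega)) (by omega)
  omega

theorem eq_of_normForm_eq_of_fst_eq (hd : 0 < d) {p q : ℕ × ℕ}
    (h : normForm d p = normForm d q) (hfst : p.1 = q.1) : p = q := by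
  have hmul : (d : ℤ) * p.2 ^ 2 = d * q.2 ^ 2 := by
    simp only [normForm, hfst] at h
    linarith
  have hsq : p.2 ^ 2 = q.2 ^ 2 := Nat.eq_of_mul_eq_mul_left hd (by exact_mod_cast hmul)
  exact Prod.ext hfst (Nat.pow_left_injective two_ne_zero hsq)

theorem card_normCollisions_lt_le_mulEnergy (hd : 0 < d)
    (hP : ∀ p ∈ P, 2 * p.1 ≤ L ∧ 2 * (d * p.2) ≤ L) :
    #{pq ∈ normCollisions d P | pq.2.1 < pq.1.1} ≤ mulEnergy (Icc 1 L) (Icc 1 L) := by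
  have hbounds (p q : ℕ × ℕ) (hpq : (p, q) ∈ {pq ∈ normCollisions d P | pq.2.1 < pq.1.1}) :
      q.1 < p.1 ∧ q.2 < p.2 ∧ p.1 + q.1 ≤ L ∧ d * p.2 ≤ L ∧ p.2 + q.2 ≤ L ∧
        normForm d p = normForm d q := by
    simp only [normCollisions, mem_filter, mem_product] at hpq
    obtain ⟨⟨⟨hp, hq⟩, heq⟩, hlt⟩ := hpq
    have := hP p hp
    have := hP q hq
    have := Nat.le_mul_of_pos_left p.2 hd
    have := Nat.le_mul_of_pos_left q.2 hd
    exact ⟨hlt, snd_lt_snd_of_normForm_eq heq hlt, by omega, by omega, by omega, heq⟩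
  refine card_le_card_of_injOn
    (fun ⟨p, q⟩ ↦ ((p.1 - q.1, d * (p.2 - q.2)), (p.1 + q.1, p.2 + q.2))) ?_ ?_
  · rintro ⟨p, q⟩ hpq
    obtain ⟨hfst, hsnd, hfstL, hdL, hsndL, heq⟩ := hbounds _ _ hpq
    have hpos : 0 < d * (p.2 - q.2) := Nat.mul_pos hd (Nat.sub_pos_of_lt hsnd)
    have hle : d * (p.2 - q.2) ≤ L := (Nat.mul_le_mul_left d (Nat.sub_le _ _)).trans hdL
    simp only [mem_coe, mem_filter, mem_product, mem_Icc]
    refine ⟨by omega, ?_⟩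
    zify [hfst.le, hsnd.le]
    exact normForm_eq_normForm_iff.1 heq
  · rintro ⟨p, q⟩ hpq ⟨p', q'⟩ hpq' heq
    obtain ⟨hfst, hsnd, -⟩ := hbounds _ _ hpq
    obtain ⟨hfst', hsnd', -⟩ := hbounds _ _ hpq'
    simp only [Prod.mk.injEq, Nat.mul_right_inj hd.ne'] at heq
    simp only [Prod.ext_iff]
    omega

theorem card_normCollisions_le (hd : 0 < d) (hP : ∀ p ∈ P, 2 * p.1 ≤ L ∧ 2 * (d * p.2) ≤ L) :
    #(normCollisions d P) ≤ #P + 2 * mulEnergy (Icc 1 L) (Icc 1 L) := by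
  set upper := {pq ∈ normCollisions d P | pq.2.1 < pq.1.1}
  have hsubset : normCollisions d P ⊆ P.diag ∪ (upper ∪ upper.image Prod.swap) := by
    rintro ⟨p, q⟩ hpq
    have hmem := mem_filter.1 hpq
    obtain ⟨hp, hq⟩ := mem_product.1 hmem.1
    rw [mem_union, mem_union]
    rcases lt_trichotomy p.1 q.1 with hlt | heq | hlt
    · refine .inr (.inr (mem_image.2 ⟨(q, p), mem_filter.2 ⟨?_, hlt⟩, rfl⟩))
      exact mem_filter.2 ⟨mem_product.2 ⟨hq, hp⟩, hmem.2.symm⟩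
    · exact .inl (mem_diag.2 ⟨hp, eq_of_normForm_eq_of_fst_eq hd hmem.2 heq⟩)
    · exact .inr (.inl (mem_filter.2 ⟨hpq, hlt⟩))
  have hle : #upper ≤ mulEnergy (Icc 1 L) (Icc 1 L) := card_normCollisions_lt_le_mulEnergy hd hP
  calc #(normCollisions d P) ≤ #(P.diag ∪ (upper ∪ upper.image Prod.swap)) := card_le_card hsubset
    _ ≤ #P.diag + (#upper + #(upper.image Prod.swap)) :=
        (card_union_le _ _).trans (Nat.add_le_add_left (card_union_le _ _) _)
    _ ≤ #P + 2 * mulEnergy (Icc 1 L) (Icc 1 L) := by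
        have := card_image_le (s := upper) (f := Prod.swap)
        rw [diag_card]
        omega

end NormForm

section CoprimePairs

open Finset

variable {m q : ℕ}

theorem card_filter_dvd_linear_le (hqm : Nat.Coprime q m) (c A N : ℕ) :
    #{a ∈ Ico A (A + N) | q ∣ m * a + c} ≤ N / q + 1 := by
  rw [← card_range (N / q + 1)]
  refine card_le_card_of_injOn (fun a ↦ (a - A) / q) ?_ ?_
  · intro a ha
    simp only [mem_coe, mem_filter, mem_Ico] at ha
    simp only [mem_coe, mem_range, Nat.lt_succ_iff]
    exact Nat.div_le_div_right (by omega)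
  · intro a ha b hb heq
    dsimp only at heq
    simp only [mem_coe, mem_filter, mem_Ico] at ha hb
    have hmul : m * a + c ≡ m * b + c [MOD q] :=
      ((Nat.modEq_zero_iff_dvd).2 ha.2).trans ((Nat.modEq_zero_iff_dvd).2 hb.2).symm
    have hmod : a - A + A ≡ b - A + A [MOD q] := by
      rw [Nat.sub_add_cancel ha.1.1, Nat.sub_add_cancel hb.1.1]
      exact (hmul.add_right_cancel' c).cancel_left_of_coprime hqm
    have hsub : a - A = b - A := by
      rw [← Nat.div_add_mod (a - A) q, ← Nat.div_add_mod (b - A) q, heq,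
        hmod.add_right_cancel' A]
    omega

theorem card_common_multiples_le {N : ℕ} (hq : 0 < q) (hqN : q ≤ N) (hqm : Nat.Coprime q m)
    (c A : ℕ) :
    (#({a ∈ Ico A (A + N) | q ∣ m * a + c} ×ˢ {b ∈ Ioc 0 N | q ∣ b}) : ℝ) ≤
      2 * (N : ℝ) ^ 2 * ((q : ℝ) ^ 2)⁻¹ := by
  have hone : (1 : ℝ) ≤ N / q := by
    rw [one_le_div (by exact_mod_cast hq)]
    exact_mod_cast hqN
  have hdiv : ((N / q : ℕ) : ℝ) ≤ N / q := Nat.cast_div_le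
  rw [card_product, Nat.Ioc_filter_dvd_card_eq_div]
  calc ((#{a ∈ Ico A (A + N) | q ∣ m * a + c} * (N / q) : ℕ) : ℝ)
      ≤ ((N / q + 1 : ℕ) : ℝ) * ((N / q : ℕ) : ℝ) := by
        rw [← Nat.cast_mul]
        exact_mod_cast Nat.mul_le_mul_right _ (card_filter_dvd_linear_le hqm c A N)
    _ ≤ (N / q + N / q) * (N / q) := by
        push_cast
        gcongr
    _ = 2 * (N : ℝ) ^ 2 * ((q : ℝ) ^ 2)⁻¹ := by ring

theorem exists_dvd_of_not_coprime_linear {m c a b : ℕ} (hm : 6 ∣ m) (hc : Nat.Coprime c m)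
    (h : ¬ Nat.Coprime (m * a + c) b) :
    ∃ q, 4 < q ∧ Nat.Coprime q m ∧ q ∣ m * a + c ∧ q ∣ b := by
  obtain ⟨q, hq, hqa, hqb⟩ := Nat.Prime.not_coprime_iff_dvd.1 h
  have hqm : ¬ q ∣ m := fun hdvd ↦ hq.one_lt.ne' <| Nat.dvd_one.1 <|
    hc ▸ Nat.dvd_gcd ((Nat.dvd_add_right (hdvd.mul_right a)).1 hqa) hdvd
  refine ⟨q, ?_, hq.coprime_iff_not_dvd.2 hqm, hqa, hqb⟩
  by_contra! hq4
  have : q ∣ 6 := by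
    have := hq.two_le
    interval_cases q
    · norm_num
    · norm_num
    · exact absurd hq (by norm_num)
  exact hqm (this.trans hm)

theorem card_not_coprime_pairs_le {c : ℕ} (hm : 6 ∣ m) (hc : Nat.Coprime c m) (A N : ℕ) :
    (#{ab ∈ Ico A (A + N) ×ˢ Ioc 0 N | ¬ Nat.Coprime (m * ab.1 + c) ab.2} : ℝ) ≤
      4 / 5 * (N : ℝ) ^ 2 := by
  set moduli := {q ∈ Ioo 4 (N + 1) | Nat.Coprime q m}
  set multiples : ℕ → Finset (ℕ × ℕ) := fun q ↦
    {a ∈ Ico A (A + N) | q ∣ m * a + c} ×ˢ {b ∈ Ioc 0 N | q ∣ b}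
  have hsubset : {ab ∈ Ico A (A + N) ×ˢ Ioc 0 N | ¬ Nat.Coprime (m * ab.1 + c) ab.2} ⊆
      moduli.biUnion multiples := by
    rintro ⟨a, b⟩ hab
    obtain ⟨hmem, hncop⟩ := mem_filter.1 hab
    obtain ⟨ha, hb⟩ := mem_product.1 hmem
    obtain ⟨q, hq4, hqm, hqa, hqb⟩ := exists_dvd_of_not_coprime_linear hm hc hncop
    have hqN : q ≤ N := (Nat.le_of_dvd (mem_Ioc.1 hb).1 hqb).trans (mem_Ioc.1 hb).2
    exact mem_biUnion.2 ⟨q, mem_filter.2 ⟨mem_Ioo.2 ⟨hq4, Nat.lt_succ_of_le hqN⟩, hqm⟩,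
      mem_product.2 ⟨mem_filter.2 ⟨ha, hqa⟩, mem_filter.2 ⟨hb, hqb⟩⟩⟩
  have hmul : ∀ q ∈ moduli, (#(multiples q) : ℝ) ≤ 2 * (N : ℝ) ^ 2 * ((q : ℝ) ^ 2)⁻¹ := by
    intro q hq
    obtain ⟨hqIoo, hqm⟩ := mem_filter.1 hq
    rw [mem_Ioo] at hqIoo
    exact card_common_multiples_le (by omega) (by omega) hqm c A
  calc _ ≤ ∑ q ∈ moduli, (#(multiples q) : ℝ) := by
        exact_mod_cast (card_le_card hsubset).trans card_biUnion_le
    _ ≤ ∑ q ∈ moduli, 2 * (N : ℝ) ^ 2 * ((q : ℝ) ^ 2)⁻¹ := sum_le_sum hmul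
    _ ≤ ∑ q ∈ Ioo 4 (N + 1), 2 * (N : ℝ) ^ 2 * ((q : ℝ) ^ 2)⁻¹ :=
        sum_le_sum_of_subset_of_nonneg (filter_subset _ _) fun _ _ _ ↦ by positivity
    _ ≤ 2 * (N : ℝ) ^ 2 * (2 / 5) := by
        rw [← mul_sum]
        gcongr
        convert sum_Ioo_inv_sq_le (α := ℝ) 4 (N + 1) using 1
        norm_num
    _ = 4 / 5 * (N : ℝ) ^ 2 := by ring

theorem le_card_coprime_pairs {c : ℕ} (hm : 6 ∣ m) (hc : Nat.Coprime c m) (A N : ℕ) :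
    (N : ℝ) ^ 2 / 5 ≤
      #{ab ∈ Ico A (A + N) ×ˢ Ioc 0 N | Nat.Coprime (m * ab.1 + c) ab.2} := by
  have hsplit := card_filter_add_card_filter_not (s := Ico A (A + N) ×ˢ Ioc 0 N)
    fun ab ↦ Nat.Coprime (m * ab.1 + c) ab.2
  have htotal : #(Ico A (A + N) ×ˢ Ioc 0 N) = N ^ 2 := by simp [sq]
  rw [htotal] at hsplit
  have hsplitR := congrArg (Nat.cast (R := ℝ)) hsplit
  push_cast at hsplitR
  linarith [card_not_coprime_pairs_le hm hc A N]

end CoprimePairs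

section HasseFailures

open Finset

/-- The pairs `(78a + 1, 6b)` of coprime integers with `N ≤ a < 2N` and `1 ≤ b ≤ N`. Their norms
`u² - 13v²` are positive since `a ≥ b`, and admissible. -/
def admissiblePairs (N : ℕ) : Finset (ℕ × ℕ) :=
  image (fun ab ↦ (78 * ab.1 + 1, 6 * ab.2))
    {ab ∈ Ico N (N + N) ×ˢ Ioc 0 N | Nat.Coprime (78 * ab.1 + 1) ab.2}

/-- The integers `k` with `|k| ≤ M` for which the integral Hasse principle fails. -/
def hasseFailures (M : ℝ) : Set ℤ :=
  {k : ℤ | |(k : ℝ)| ≤ M ∧ MK3LocallySolvable k ∧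
    ¬ ∃ x y z : ℤ, markoffK3 36 468 4330 x y z = k}

variable {N : ℕ}

theorem card_admissiblePairs (N : ℕ) : #(admissiblePairs N) =
    #{ab ∈ Ico N (N + N) ×ˢ Ioc 0 N | Nat.Coprime (78 * ab.1 + 1) ab.2} :=
  card_image_of_injective _ fun ab ab' h ↦ by
    simp only [Prod.mk.injEq] at h
    exact Prod.ext (by omega) (by omega)

theorem card_admissiblePairs_le (N : ℕ) : #(admissiblePairs N) ≤ N ^ 2 := by
  rw [card_admissiblePairs]
  refine (card_filter_le _ _).trans_eq ?_
  simp [sq]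

theorem le_card_admissiblePairs (N : ℕ) : (N : ℝ) ^ 2 / 5 ≤ #(admissiblePairs N) := by
  rw [card_admissiblePairs]
  exact le_card_coprime_pairs (by norm_num) (Nat.coprime_one_left 78) N N

theorem bounds_of_mem_admissiblePairs {p : ℕ × ℕ} (hp : p ∈ admissiblePairs N) :
    p.1 ≤ 156 * N ∧ p.2 ≤ 6 * N ∧ 13 * p.2 ≤ p.1 := by
  simp only [admissiblePairs, mem_image, mem_filter, mem_product, mem_Ico, mem_Ioc] at hp
  obtain ⟨ab, hab, rfl⟩ := hp
  dsimp only
  omega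

theorem normForm_nonneg_of_mem_admissiblePairs {p : ℕ × ℕ} (hp : p ∈ admissiblePairs N) :
    0 ≤ normForm 13 p := by
  obtain ⟨-, -, h⟩ := bounds_of_mem_admissiblePairs hp
  zify at h
  unfold normForm
  push_cast
  nlinarith

theorem normForm_le_of_mem_admissiblePairs {p : ℕ × ℕ} (hp : p ∈ admissiblePairs N) :
    normForm 13 p ≤ (156 * N) ^ 2 := by
  have h : (p.1 : ℤ) ≤ 156 * N := by exact_mod_cast (bounds_of_mem_admissiblePairs hp).1
  calc normForm 13 p ≤ (p.1 : ℤ) ^ 2 := sub_le_self _ (by positivity)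
    _ ≤ (156 * N) ^ 2 := by gcongr

theorem isAdmissible_normForm_of_mem_admissiblePairs {p : ℕ × ℕ} (hp : p ∈ admissiblePairs N) :
    IsAdmissible (normForm 13 p) := by
  obtain ⟨⟨a, b⟩, hab, rfl⟩ := mem_image.1 hp
  have hcop : IsCoprime (78 * (a : ℤ) + 1) b := by
    exact_mod_cast Nat.isCoprime_iff_coprime.2 (mem_filter.1 hab).2
  have hcop6 : IsCoprime (78 * (a : ℤ) + 1) 6 := ⟨1, -13 * a, by ring⟩
  have hmod : 78 * (a : ℤ) + 1 ≡ 1 [ZMOD 78] := by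
    simp [Int.modEq_iff_dvd]
  have := IsAdmissible.of_isCoprime hmod (dvd_mul_right 6 (b : ℤ)) (hcop6.mul_right hcop)
  simpa [normForm] using this

theorem hasseFailures_finite (M : ℝ) : (hasseFailures M).Finite := by
  refine (Set.finite_Icc (-⌊M⌋) ⌊M⌋).subset fun k hk ↦ ?_
  obtain ⟨hlower, hupper⟩ := abs_le.1 hk.1
  exact ⟨neg_le.1 (Int.le_floor.2 (by push_cast; linarith)), Int.le_floor.2 hupper⟩

theorem IsAdmissible.sq_mem_hasseFailures {l : ℤ} (hl : IsAdmissible l) {M : ℝ}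
    (hM : (l : ℝ) ^ 2 ≤ M) : l ^ 2 ∈ hasseFailures M := by
  refine ⟨?_, hl.locallySolvable, fun ⟨x, y, z, h⟩ ↦ hl.markoffK3_ne_sq x y z h⟩
  push_cast
  rwa [abs_of_nonneg (sq_nonneg _)]

theorem card_image_normForm_le_ncard_hasseFailures {M : ℝ} (hM : (156 * N : ℝ) ^ 4 ≤ M) :
    #((admissiblePairs N).image (normForm 13)) ≤ (hasseFailures M).ncard := by
  rw [← Set.ncard_coe_finset]
  refine Set.ncard_le_ncard_of_injOn (· ^ 2) ?_ ?_ (hasseFailures_finite M)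
  · intro l hl
    obtain ⟨p, hp, rfl⟩ := mem_image.1 (mem_coe.1 hl)
    have hsq : normForm 13 p ^ 2 ≤ ((156 * N) ^ 2) ^ 2 :=
      pow_le_pow_left₀ (normForm_nonneg_of_mem_admissiblePairs hp)
        (normForm_le_of_mem_admissiblePairs hp) 2
    refine (isAdmissible_normForm_of_mem_admissiblePairs hp).sq_mem_hasseFailures (le_trans ?_ hM)
    rw [← pow_mul] at hsq
    exact_mod_cast hsq
  · intro l hl l' hl' heq
    obtain ⟨p, hp, rfl⟩ := mem_image.1 (mem_coe.1 hl)
    obtain ⟨p', hp', rfl⟩ := mem_image.1 (mem_coe.1 hl')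
    exact (pow_left_inj₀ (normForm_nonneg_of_mem_admissiblePairs hp)
      (normForm_nonneg_of_mem_admissiblePairs hp') two_ne_zero).1 heq

theorem card_normCollisions_admissiblePairs_le (N : ℕ) :
    (#(normCollisions 13 (admissiblePairs N)) : ℝ) ≤
      4 * 10 ^ 5 * N ^ 2 * (1 + Real.log (312 * N)) := by
  have hP : ∀ p ∈ admissiblePairs N, 2 * p.1 ≤ 312 * N ∧ 2 * (13 * p.2) ≤ 312 * N := by
    intro p hp
    have := bounds_of_mem_admissiblePairs hp
    omega
  have hlog : 0 ≤ Real.log (312 * N) := by exact_mod_cast Real.log_natCast_nonneg (312 * N)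
  have henergy := mulEnergy_Icc_le (312 * N)
  push_cast at henergy
  calc (#(normCollisions 13 (admissiblePairs N)) : ℝ)
      ≤ #(admissiblePairs N) + 2 * mulEnergy (Icc 1 (312 * N)) (Icc 1 (312 * N)) := by
        exact_mod_cast card_normCollisions_le (by norm_num) hP
    _ ≤ N ^ 2 + 2 * (2 * (312 * N) ^ 2 * (1 + Real.log (312 * N))) := by
        gcongr
        exact_mod_cast card_admissiblePairs_le N
    _ ≤ 4 * 10 ^ 5 * N ^ 2 * (1 + Real.log (312 * N)) := by
        nlinarith [mul_nonneg (sq_nonneg (N : ℝ)) hlog, sq_nonneg (N : ℝ)]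

theorem sq_le_card_image_normForm_mul_log (hN : 0 < N) :
    (N : ℝ) ^ 2 ≤
      10 ^ 7 * (1 + Real.log (312 * N)) * #((admissiblePairs N).image (normForm 13)) := by
  set values := #((admissiblePairs N).image (normForm 13))
  have hcauchy : (#(admissiblePairs N) : ℝ) ^ 2 ≤
      values * #(normCollisions 13 (admissiblePairs N)) := by
    exact_mod_cast sq_card_le_card_image_mul_card_collisions (admissiblePairs N) (normForm 13)
  have hN2 : (0 : ℝ) < N ^ 2 := by positivity
  refine le_of_mul_le_mul_left ?_ hN2
  calc (N : ℝ) ^ 2 * N ^ 2 = 25 * (N ^ 2 / 5) ^ 2 := by ring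
    _ ≤ 25 * (#(admissiblePairs N) : ℝ) ^ 2 := by
        gcongr
        exact le_card_admissiblePairs N
    _ ≤ 25 * (values * (4 * 10 ^ 5 * N ^ 2 * (1 + Real.log (312 * N)))) := by
        gcongr
        exact hcauchy.trans (by gcongr; exact card_normCollisions_admissiblePairs_le N)
    _ = N ^ 2 * (10 ^ 7 * (1 + Real.log (312 * N)) * values) := by ring

theorem exists_nat_fourth_root_approx {M : ℝ} (hM : 10 ^ 16 ≤ M) :
    ∃ N : ℕ, 0 < N ∧ (156 * N : ℝ) ^ 4 ≤ M ∧ √M ≤ (312 * N) ^ 2 ∧ 312 * N ≤ M := by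
  have hM0 : 0 ≤ M := le_trans (by norm_num) hM
  set t := √(√M)
  have ht2 : t ^ 2 = √M := Real.sq_sqrt (Real.sqrt_nonneg M)
  have ht4 : t ^ 4 = M := by rw [← Real.sq_sqrt hM0, ← ht2]; ring
  have ht0 : 0 ≤ t := Real.sqrt_nonneg _
  have htlarge : 10 ^ 4 ≤ t := le_of_pow_le_pow_left₀ four_ne_zero ht0 (by linarith)
  have hfloor : (⌊t / 156⌋₊ : ℝ) ≤ t / 156 := Nat.floor_le (by positivity)
  have hfloor' : t / 156 < ⌊t / 156⌋₊ + 1 := Nat.lt_floor_add_one _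
  refine ⟨⌊t / 156⌋₊, Nat.floor_pos.2 (by linarith), ?_, ?_, ?_⟩
  · rw [← ht4]
    exact pow_le_pow_left₀ (by positivity) (by linarith) 4
  · rw [← ht2]
    exact pow_le_pow_left₀ ht0 (by linarith) 2
  · have : 2 * t ≤ t ^ 4 := by nlinarith [pow_le_pow_left₀ (by norm_num) htlarge 3]
    linarith

end HasseFailures

/-- second counting assertion of Theorem 5.4. The number of `k ∈ ℤ` with
`|k| ≤ M` for which `𝒰_k` fails the integral Hasse principle is `≫ √M / log M`. -/
theorem stmt10 :
    ∃ c M₀ : ℝ, 0 < c ∧ ∀ M : ℝ, M₀ ≤ M →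
      c * Real.sqrt M / Real.log M ≤
        ({k : ℤ | |(k : ℝ)| ≤ M ∧ MK3LocallySolvable k ∧
          ¬ ∃ x y z : ℤ, (x ^ 2 - 36) * (y ^ 2 - 36) * (z ^ 2 - 36) +
            468 * (x * y * z - 4330) ^ 2 = k}.ncard : ℝ) := by
  refine ⟨1 / 10 ^ 13, 10 ^ 16, by norm_num, fun M hM ↦ ?_⟩
  change _ ≤ ((hasseFailures M).ncard : ℝ)
  obtain ⟨N, hN, hNM, hsqrt, hNlog⟩ := exists_nat_fourth_root_approx hM
  have hlogN : Real.log (312 * N) ≤ Real.log M := Real.log_le_log (by positivity) hNlog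
  have hlogM : 1 ≤ Real.log M := by
    rw [Real.le_log_iff_exp_le (by linarith)]
    linarith [Real.exp_one_lt_three]
  have hvalues : (((admissiblePairs N).image (normForm 13)).card : ℝ) ≤ (hasseFailures M).ncard :=
    mod_cast card_image_normForm_le_ncard_hasseFailures hNM
  rw [div_le_iff₀ (by linarith)]
  calc 1 / 10 ^ 13 * √M ≤ 1 / 10 ^ 13 * (312 ^ 2 * N ^ 2) := by rw [← mul_pow]; gcongr
    _ ≤ 1 / 10 ^ 13 * (312 ^ 2 * (10 ^ 7 * (Real.log M + Real.log M) *
          (hasseFailures M).ncard)) := by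
        gcongr
        refine (sq_le_card_image_normForm_mul_log hN).trans ?_
        gcongr
    _ ≤ (hasseFailures M).ncard * Real.log M := by
        nlinarith [mul_nonneg (Nat.cast_nonneg (α := ℝ) (hasseFailures M).ncard)
          (zero_le_one.trans hlogM)]
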